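/- Let E be a homogeneous effect algebra and let M be an internally compatible subset of E with M = M̄. If a, b ∈ M and b ≤ a, then M ∪ {a ⊖ b} is an internally compatible set. -/

import Mathlib

/-- An effect algebra: a partial commutative, associative operation `oplus`
(with definedness encoded via `Option`), constants `zero` and `one`,
unique orthosupplements, and `a ⊕ 1` defined only for `a = 0`. -/
structure EffectAlgebra (E : Type*) where
  oplus : E → E → Option E
  zero : E
  one : E
  comm : ∀ a b, oplus a b = oplus b a
  assoc : ∀ a b c ab abc, oplus a b = some ab → oplus ab c = some abc →
    ∃ bc, oplus b c = some bc ∧ oplus a bc = some abc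
  compl_exists : ∀ a, ∃ b, oplus a b = some one
  compl_unique : ∀ a b c, oplus a b = some one → oplus a c = some one → b = c
  add_one : ∀ a b, oplus a one = some b → a = zero

namespace EffectAlgebra

variable {E : Type*} (A : EffectAlgebra E)

/-- `a ⊥ b` : the sum `a ⊕ b` is defined. -/
def Perp (a b : E) : Prop := (A.oplus a b).isSome

/-- `a ≤ b` iff `b = a ⊕ c` for some `c`. -/
def le (a b : E) : Prop := ∃ c, A.oplus a c = some b

/-- The orthosupplement `a'`: the unique `b` with `a ⊕ b = 1`. -/
noncomputable def compl (a : E) : E :=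
  @Classical.epsilon E ⟨A.zero⟩ fun b => A.oplus a b = some A.one

/-- `a ⊖ b` : the unique `c` with `b ⊕ c = a` (defined when `b ≤ a`). -/
noncomputable def ominus (a b : E) : E :=
  @Classical.epsilon E ⟨A.zero⟩ fun c => A.oplus b c = some a

/-- Homogeneity. -/
def Homogeneous : Prop :=
  ∀ u v₁ v₂ s, A.oplus v₁ v₂ = some s → A.le u s → A.le u (A.compl s) →
    ∃ u₁ u₂, A.le u₁ v₁ ∧ A.le u₂ v₂ ∧ A.oplus u₁ u₂ = some u

/-- Riesz decomposition property. -/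
def RDP : Prop :=
  ∀ u v₁ v₂ s, A.oplus v₁ v₂ = some s → A.le u s →
    ∃ u₁ u₂, A.le u₁ v₁ ∧ A.le u₂ v₂ ∧ A.oplus u₁ u₂ = some u

/-- The sum `c₁ ⊕ … ⊕ cₙ` of a finite family (a list); `some s` iff the family
is orthogonal with sum `s`. -/
def sumList : List E → Option E
  | [] => some A.zero
  | x :: xs => (sumList xs).bind fun s => A.oplus x s

/-- The subfamily of `C` indexed by a set of indices `S ⊆ {1,…,n}`. -/
def pickList (C : List E) (S : Finset (Fin C.length)) : List E :=
  (S.sort (· ≤ ·)).map C.get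

/-- `C` is an orthogonal cover of `M`. -/
def IsCoverOf (C : List E) (M : Set E) : Prop :=
  (A.sumList C).isSome ∧
    ∀ a ∈ M, ∃ S : Finset (Fin C.length), A.sumList (pickList C S) = some a

/-- `M` is compatible with covers in `X`: every finite subset of `M` has an
orthogonal cover with range contained in `X`. -/
def CompatWithCoversIn (M X : Set E) : Prop :=
  ∀ F : Finset E, ↑F ⊆ M →
    ∃ C : List E, (∀ c ∈ C, c ∈ X) ∧ A.IsCoverOf C ↑F

/-- `M` is compatible (with covers in `E`). -/
def Compatible (M : Set E) : Prop := A.CompatWithCoversIn M Set.univ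

/-- `M` is internally compatible. -/
def InternallyCompatible (M : Set E) : Prop := A.CompatWithCoversIn M M

/-- `D` is a refinement of `C`: a partition `{P i}` of the index set of `D`
with `C i = ⊕_{j ∈ P i} D j`. -/
def IsRefinement (D C : List E) : Prop :=
  ∃ P : Fin C.length → Finset (Fin D.length),
    (∀ i j, i ≠ j → Disjoint (P i) (P j)) ∧
    (∀ k, ∃ i, k ∈ P i) ∧
    (∀ i, A.sumList (pickList D (P i)) = some (C.get i))

/-- One step of the closure construction `M ↦ M₁`. -/
def closureStep (M : Set E) : Set E :=
  {x | ∃ y ∈ M, A.le x y ∧ A.le x (A.compl y)} ∪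
  {z | ∃ y ∈ M, ∃ x, A.le x y ∧ A.le x (A.compl y) ∧ A.oplus x z = some y}

/-- The sets `Mₙ`. -/
def closureSeq (M : Set E) (n : ℕ) : Set E := (A.closureStep)^[n] M

/-- The closure `M̄ = ⋃ₙ Mₙ`. -/
def closure (M : Set E) : Set E := ⋃ n, A.closureSeq M n

/-- `B` is a sub-effect algebra of `E`. -/
def IsSubEA (B : Set E) : Prop :=
  A.one ∈ B ∧ ∀ a ∈ B, ∀ b ∈ B, A.le b a → A.ominus a b ∈ B

/-- The Riesz decomposition property for (the effect algebra on) a subset `B`. -/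
def RDPOn (B : Set E) : Prop :=
  ∀ u v₁ v₂ s, u ∈ B → v₁ ∈ B → v₂ ∈ B → A.oplus v₁ v₂ = some s → A.le u s →
    ∃ u₁ u₂, u₁ ∈ B ∧ u₂ ∈ B ∧ A.le u₁ v₁ ∧ A.le u₂ v₂ ∧ A.oplus u₁ u₂ = some u

/-- Homogeneity for (the effect algebra on) a subset `B`. -/
def HomogeneousOn (B : Set E) : Prop :=
  ∀ u v₁ v₂ s, u ∈ B → v₁ ∈ B → v₂ ∈ B → A.oplus v₁ v₂ = some s →
    A.le u s → A.le u (A.compl s) →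
    ∃ u₁ u₂, u₁ ∈ B ∧ u₂ ∈ B ∧ A.le u₁ v₁ ∧ A.le u₂ v₂ ∧ A.oplus u₁ u₂ = some u

/-- A block: a maximal sub-effect algebra satisfying the Riesz decomposition
property. -/
def IsBlock (B : Set E) : Prop :=
  A.IsSubEA B ∧ A.RDPOn B ∧
    ∀ B', A.IsSubEA B' → A.RDPOn B' → B ⊆ B' → B' = B

/-- A block of the sub-effect algebra on `F`: a maximal sub-effect algebra of
`F` satisfying the Riesz decomposition property. -/
def IsBlockIn (F B : Set E) : Prop :=
  B ⊆ F ∧ A.IsSubEA B ∧ A.RDPOn B ∧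
    ∀ B', B' ⊆ F → A.IsSubEA B' → A.RDPOn B' → B ⊆ B' → B' = B

/-- `a` is sharp: the infimum `a ∧ a'` exists and equals `0`, i.e. every common
lower bound of `a` and `a'` is `0`. -/
def Sharp (a : E) : Prop :=
  ∀ b, A.le b a → A.le b (A.compl a) → b = A.zero

/-- `a` is sharp in the sub-effect algebra on `F`. -/
def SharpIn (F : Set E) (a : E) : Prop :=
  a ∈ F ∧ ∀ b ∈ F, A.le b a → A.le b (A.compl a) → b = A.zero

/-- `a` is principal. -/
def Principal (a : E) : Prop :=
  ∀ x y s, A.le x a → A.le y a → A.oplus x y = some s → A.le s a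

/-- `a` is principal in the sub-effect algebra on `B`. -/
def PrincipalIn (B : Set E) (a : E) : Prop :=
  a ∈ B ∧ ∀ x ∈ B, ∀ y ∈ B, ∀ s, A.le x a → A.le y a →
    A.oplus x y = some s → A.le s a

/-- `a` is central: principal, and every `b` has a unique decomposition
`b = b₁ ⊕ b₂` with `b₁ ≤ a`, `b₂ ≤ a'`. -/
def Central (a : E) : Prop :=
  A.Principal a ∧ ∀ b, ∃! p : E × E,
    A.le p.1 a ∧ A.le p.2 (A.compl a) ∧ A.oplus p.1 p.2 = some b

/-- `a` is central in the sub-effect algebra on `B`. -/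
def CentralIn (B : Set E) (a : E) : Prop :=
  A.PrincipalIn B a ∧ ∀ b ∈ B, ∃! p : E × E,
    p.1 ∈ B ∧ p.2 ∈ B ∧ A.le p.1 a ∧ A.le p.2 (A.compl a) ∧
      A.oplus p.1 p.2 = some b

/-- The center `C(E)`. -/
def center : Set E := {a | A.Central a}

/-- The compatibility center `K(E)`: the intersection of all blocks. -/
def compatCenter : Set E := {x | ∀ B, A.IsBlock B → x ∈ B}

end EffectAlgebra

/-!
Cover `a`, `b` and the other given elements by an orthogonal family `c`, say with
`a = ⊕_{i ∈ P} cᵢ` and `b = ⊕_{i ∈ Q} cᵢ`, and put `p = ⊕_{i ∈ P \ Q} cᵢ`, `q = ⊕_{i ∈ Q \ P} cᵢ`.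
Cancelling the common part gives `q ⊕ (a ⊖ b) = p`, and `q ⊥ p` because the index sets are disjoint.
Homogeneity therefore splits `q = ⊕_{i ∈ P \ Q} fᵢ` with `fᵢ ≤ cᵢ` and `fᵢ ⊥ cᵢ`, so that
`a ⊖ b = ⊕_{i ∈ P \ Q} (cᵢ ⊖ fᵢ)`. Replacing each `cᵢ` by the pair `fᵢ`, `cᵢ ⊖ fᵢ` refines `c` to a
cover that also reaches `a ⊖ b`, and these pairs are exactly what one closure step adds.
-/

namespace EffectAlgebra

section Totalization

variable {E : Type*} (A : EffectAlgebra E)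

theorem one_oplus_zero : A.oplus A.one A.zero = some A.one := by
  obtain ⟨x, hx⟩ := A.compl_exists A.one
  obtain rfl : x = A.zero := A.add_one x A.one (A.comm _ _ ▸ hx)
  exact hx

theorem oplus_zero (a : E) : A.oplus a A.zero = some a := by
  obtain ⟨a', ha'⟩ := A.compl_exists a
  rw [A.comm] at ha'
  obtain ⟨z, hz, hz'⟩ := A.assoc a' a A.zero A.one A.one ha' A.one_oplus_zero
  rw [hz, A.compl_unique a' z a hz' ha']

/-- The commutative monoid obtained from an effect algebra by adjoining an absorbing element
(`none`) as the value of all undefined sums. It makes the big-operator library available for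
orthogonal families: a family is orthogonal when its sum in the totalization lies in the range of
`EffectAlgebra.of`. -/
def Totalization (_A : EffectAlgebra E) : Type _ := Option E

/-- The embedding of an effect algebra into its totalization. -/
def of (a : E) : A.Totalization := some a

instance : Add A.Totalization :=
  ⟨fun x y => Option.bind x fun a => Option.bind y fun b => A.oplus a b⟩

instance : Zero A.Totalization := ⟨A.of A.zero⟩

variable {A}

theorem of_add_of_eq_of_iff {a b c : E} : A.of a + A.of b = A.of c ↔ A.oplus a b = some c :=
  Iff.rfl

theorem add_eq_of_iff {x y : A.Totalization} {c : E} :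
    x + y = A.of c ↔ ∃ a b, x = A.of a ∧ y = A.of b ∧ A.oplus a b = some c := by
  constructor
  · intro h
    obtain ⟨a, hx, h⟩ := Option.bind_eq_some_iff.1 h
    obtain ⟨b, hy, h⟩ := Option.bind_eq_some_iff.1 h
    exact ⟨a, b, hx, hy, h⟩
  · rintro ⟨a, b, rfl, rfl, h⟩
    exact h

theorem totalization_add_comm (x y : A.Totalization) : x + y = y + x := by
  refine Option.ext fun c => ?_
  change x + y = A.of c ↔ y + x = A.of c
  simp only [add_eq_of_iff]
  constructor <;> rintro ⟨a, b, hx, hy, h⟩ <;> exact ⟨b, a, hy, hx, A.comm a b ▸ h⟩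

theorem add_add_eq_of {x y z : A.Totalization} {e : E} (h : x + y + z = A.of e) :
    x + (y + z) = A.of e := by
  obtain ⟨ab, c, hxy, rfl, habc⟩ := add_eq_of_iff.1 h
  obtain ⟨a, b, rfl, rfl, hab⟩ := add_eq_of_iff.1 hxy
  obtain ⟨bc, hbc, habc⟩ := A.assoc a b c ab e hab habc
  exact add_eq_of_iff.2 ⟨a, bc, rfl, hbc, habc⟩

instance : AddCommMonoid A.Totalization where
  add_comm := totalization_add_comm
  add_assoc x y z := by
    refine Option.ext fun e => ⟨add_add_eq_of, fun h => ?_⟩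
    rw [totalization_add_comm, totalization_add_comm x]
    refine add_add_eq_of ?_
    rw [totalization_add_comm, totalization_add_comm z]
    exact h
  add_zero x := by
    cases x with
    | none => rfl
    | some a => exact A.oplus_zero a
  zero_add x := by
    cases x with
    | none => rfl
    | some a => exact (A.comm _ _).trans (A.oplus_zero a)
  nsmul := nsmulRec

theorem of_zero : A.of A.zero = 0 :=
  rfl

theorem exists_of_eq_left {x y : A.Totalization} {c : E} (h : x + y = A.of c) :
    ∃ a, x = A.of a := by
  obtain ⟨a, -, hx, -⟩ := add_eq_of_iff.1 h
  exact ⟨a, hx⟩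

theorem exists_of_eq_right {x y : A.Totalization} {c : E} (h : x + y = A.of c) :
    ∃ b, y = A.of b :=
  exists_of_eq_left (add_comm x y ▸ h)

theorem of_add_of_compl (a : E) : A.of a + A.of (A.compl a) = A.of A.one :=
  Classical.epsilon_spec (p := fun b => A.oplus a b = some A.one) (A.compl_exists a)

theorem oplus_ominus {a b : E} (h : A.le b a) : A.oplus b (A.ominus a b) = some a :=
  Classical.epsilon_spec (p := fun c => A.oplus b c = some a) h

theorem add_left_cancel_of_eq_of {x y z : A.Totalization} {e : E} (hy : x + y = A.of e)
    (hz : x + z = A.of e) : y = z := by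
  have add_eq_one {w : A.Totalization} (hw : x + w = A.of e) :
      A.of (A.compl e) + x + w = A.of A.one := by
    rw [add_assoc, hw, add_comm, of_add_of_compl]
  obtain ⟨f, b, hf, rfl, hfb⟩ := add_eq_of_iff.1 (add_eq_one hy)
  obtain ⟨f', c, hf', rfl, hfc⟩ := add_eq_of_iff.1 (add_eq_one hz)
  obtain rfl : f = f' := Option.some.inj (hf.symm.trans hf')
  rw [A.compl_unique f b c hfb hfc]

end Totalization

section Order

variable {E : Type*} {A : EffectAlgebra E}

theorem zero_le (a : E) : A.le A.zero a :=
  ⟨a, zero_add (A.of a)⟩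

theorem eq_zero_of_le_zero {a : E} (h : A.le a A.zero) : a = A.zero := by
  obtain ⟨c, hc⟩ := h
  have one_add : A.of A.one + A.of a + A.of c = A.of A.one := by
    rw [add_assoc, of_add_of_eq_of_iff.2 hc, of_zero, add_zero]
  obtain ⟨e, he⟩ := exists_of_eq_left one_add
  exact A.add_one a e (A.comm _ _ ▸ he)

theorem perp_iff {a b : E} : A.Perp a b ↔ ∃ c, A.of a + A.of b = A.of c :=
  Option.isSome_iff_exists

theorem zero_perp (a : E) : A.Perp A.zero a :=
  perp_iff.2 ⟨a, zero_add (A.of a)⟩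

theorem Perp.mono {a b c d : E} (h : A.Perp b d) (hab : A.le a b) (hcd : A.le c d) :
    A.Perp a c := by
  obtain ⟨e, he⟩ := perp_iff.1 h
  obtain ⟨x, hx⟩ := hab
  obtain ⟨y, hy⟩ := hcd
  rw [← of_add_of_eq_of_iff.2 hx, ← of_add_of_eq_of_iff.2 hy, add_add_add_comm] at he
  exact perp_iff.2 (exists_of_eq_left he)

theorem le_left_of_oplus_eq {a b c : E} (h : A.oplus a b = some c) : A.le a c :=
  ⟨b, h⟩

theorem le_right_of_oplus_eq {a b c : E} (h : A.oplus a b = some c) : A.le b c :=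
  ⟨a, A.comm a b ▸ h⟩

theorem Perp.le_compl {a b : E} (h : A.Perp a b) : A.le a (A.compl b) := by
  obtain ⟨c, hc⟩ := perp_iff.1 h
  refine ⟨A.compl c, add_left_cancel_of_eq_of (x := A.of b) ?_ (of_add_of_compl b)⟩
  change A.of b + (A.of a + A.of (A.compl c)) = A.of A.one
  rw [← add_assoc, add_comm (A.of b), hc, of_add_of_compl]

end Order

section Homogeneous

variable {E : Type*} {A : EffectAlgebra E}

theorem Homogeneous.exists_sum_eq (hH : A.Homogeneous) {ι : Type*} (c : ι → E) (T : Finset ι)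
    {s u : E} (hs : ∑ i ∈ T, A.of (c i) = A.of s) (hus : A.le u s) (hperp : A.Perp u s) :
    ∃ f : ι → E, (∀ i, A.le (f i) (c i) ∧ A.Perp (f i) (c i)) ∧
      ∑ i ∈ T, A.of (f i) = A.of u := by
  classical
  induction T using Finset.induction_on generalizing s u with
  | empty =>
    obtain rfl : A.zero = s := Option.some.inj hs
    refine ⟨fun _ => A.zero, fun i => ⟨zero_le _, zero_perp _⟩, ?_⟩
    rw [eq_zero_of_le_zero hus, Finset.sum_empty, of_zero]
  | insert i T hi ih =>
    rw [Finset.sum_insert hi] at hs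
    obtain ⟨t, ht⟩ := exists_of_eq_right hs
    rw [ht, of_add_of_eq_of_iff] at hs
    obtain ⟨u₁, u₂, hu₁, hu₂, hu⟩ := hH u (c i) t s hs hus hperp.le_compl
    have perp₁ : A.Perp u₁ (c i) :=
      hperp.mono (le_left_of_oplus_eq hu) (le_left_of_oplus_eq hs)
    have perp₂ : A.Perp u₂ t := hperp.mono (le_right_of_oplus_eq hu) (le_right_of_oplus_eq hs)
    obtain ⟨f, hf, hfsum⟩ := ih ht hu₂ perp₂
    refine ⟨Function.update f i u₁, fun j => ?_, ?_⟩
    · rcases eq_or_ne j i with rfl | hji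
      · simpa only [Function.update_self] using ⟨hu₁, perp₁⟩
      · simpa only [Function.update_of_ne hji] using hf j
    · have update_eq : ∀ j ∈ T, A.of (Function.update f i u₁ j) = A.of (f j) := fun j hj => by
        rw [Function.update_of_ne (ne_of_mem_of_not_mem hj hi)]
      rw [Finset.sum_insert hi, Function.update_self, Finset.sum_congr rfl update_eq, hfsum,
        of_add_of_eq_of_iff.2 hu]

end Homogeneous

section Cover

variable {E ι κ : Type*} [Fintype ι] [Fintype κ] {A : EffectAlgebra E} {c : ι → E}
  {M N X Y : Set E}

theorem sumList_eq_some_iff {C : List E} {s : E} :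
    A.sumList C = some s ↔ (C.map A.of).sum = A.of s := by
  induction C generalizing s with
  | nil => rfl
  | cons x C ih =>
    rw [List.map_cons, List.sum_cons, add_eq_of_iff, sumList, Option.bind_eq_some_iff]
    constructor
    · rintro ⟨t, ht, hs⟩
      exact ⟨x, t, rfl, ih.1 ht, hs⟩
    · rintro ⟨y, t, hxy, ht, hs⟩
      obtain rfl : x = y := Option.some.inj hxy
      exact ⟨t, ih.2 ht, hs⟩

theorem sumList_pickList_eq_some_iff {C : List E} {S : Finset (Fin C.length)} {a : E} :
    A.sumList (pickList C S) = some a ↔ ∑ i ∈ S, A.of (C.get i) = A.of a := by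
  rw [sumList_eq_some_iff, pickList, List.map_map, ← Multiset.sum_coe, ← Multiset.map_coe,
    Finset.sort_eq]
  rfl

theorem isSome_sumList_iff {C : List E} :
    (A.sumList C).isSome ↔ ∃ s, ∑ i, A.of (C.get i) = A.of s := by
  have sum_get : ∑ i, A.of (C.get i) = (C.map A.of).sum := by
    rw [← List.sum_ofFn, ← Function.comp_def, ← List.map_ofFn, List.ofFn_get]
  simp only [Option.isSome_iff_exists, sumList_eq_some_iff, sum_get]

/-- The analogue of `EffectAlgebra.IsCoverOf` for families indexed by an arbitrary finite type
instead of lists: `c` is orthogonal and every element of `M` is the sum of a subfamily. -/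
structure IsIndexedCover (A : EffectAlgebra E) (c : ι → E) (M : Set E) : Prop where
  exists_sum_univ : ∃ s, ∑ i, A.of (c i) = A.of s
  exists_sum : ∀ a ∈ M, ∃ S : Finset ι, ∑ i ∈ S, A.of (c i) = A.of a

theorem isCoverOf_iff_isIndexedCover_get {C : List E} :
    A.IsCoverOf C M ↔ A.IsIndexedCover C.get M := by
  simp only [IsCoverOf, isSome_sumList_iff, sumList_pickList_eq_some_iff]
  exact ⟨fun h => ⟨h.1, h.2⟩, fun h => ⟨h.1, h.2⟩⟩

theorem IsIndexedCover.comp_equiv (h : A.IsIndexedCover c M) (e : κ ≃ ι) :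
    A.IsIndexedCover (c ∘ e) M where
  exists_sum_univ := by
    simpa only [Function.comp_apply, e.sum_comp fun i => A.of (c i)] using h.exists_sum_univ
  exists_sum a ha := by
    obtain ⟨S, hS⟩ := h.exists_sum a ha
    refine ⟨S.map e.symm.toEmbedding, ?_⟩
    simpa only [Finset.sum_map, Equiv.coe_toEmbedding, Function.comp_apply,
      Equiv.apply_symm_apply] using hS

theorem IsIndexedCover.exists_isCoverOf (h : A.IsIndexedCover c M) (hX : ∀ i, c i ∈ X) :
    ∃ C : List E, (∀ x ∈ C, x ∈ X) ∧ A.IsCoverOf C M := by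
  let e : Fin (Fintype.card ι) ≃ ι := (Fintype.equivFin ι).symm
  refine ⟨List.ofFn (c ∘ e), ?_, ?_⟩
  · exact List.forall_mem_ofFn_iff.2 fun i => hX (e i)
  · rw [isCoverOf_iff_isIndexedCover_get]
    have get_ofFn : (List.ofFn (c ∘ e)).get = c ∘ (finCongr List.length_ofFn).trans e :=
      funext fun i => List.get_ofFn (c ∘ e) i
    exact get_ofFn ▸ h.comp_equiv _

theorem IsIndexedCover.mono (h : A.IsIndexedCover c N) (hMN : M ⊆ N) : A.IsIndexedCover c M :=
  ⟨h.exists_sum_univ, fun a ha => h.exists_sum a (hMN ha)⟩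

theorem IsIndexedCover.insert_of_sum_eq (h : A.IsIndexedCover c M) {S : Finset ι} {d : E}
    (hd : ∑ i ∈ S, A.of (c i) = A.of d) : A.IsIndexedCover c (insert d M) :=
  ⟨h.exists_sum_univ, Set.forall_mem_insert.2 ⟨⟨S, hd⟩, h.exists_sum⟩⟩

theorem IsIndexedCover.sumElim (h : A.IsIndexedCover c M) {u v : ι → E}
    (huv : ∀ i, A.oplus (u i) (v i) = some (c i)) : A.IsIndexedCover (Sum.elim u v) M := by
  have sum_disjSum (S : Finset ι) :
      ∑ i ∈ S.disjSum S, A.of (Sum.elim u v i) = ∑ i ∈ S, A.of (c i) := by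
    rw [Finset.sum_disjSum, ← Finset.sum_add_distrib]
    exact Finset.sum_congr rfl fun i _ => huv i
  refine ⟨?_, fun a ha => ?_⟩
  · rw [← Finset.univ_disjSum_univ, sum_disjSum]
    exact h.exists_sum_univ
  · obtain ⟨S, hS⟩ := h.exists_sum a ha
    exact ⟨S.disjSum S, (sum_disjSum S).trans hS⟩

theorem perp_of_sum_eq_of_disjoint {s p q : E} {P Q : Finset ι}
    (hs : ∑ i, A.of (c i) = A.of s) (hPQ : Disjoint P Q) (hp : ∑ i ∈ P, A.of (c i) = A.of p)
    (hq : ∑ i ∈ Q, A.of (c i) = A.of q) : A.Perp p q := by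
  classical
  rw [← Finset.sum_add_sum_compl (P ∪ Q), Finset.sum_union hPQ, hp, hq] at hs
  exact perp_iff.2 (exists_of_eq_left hs)

theorem IsIndexedCover.exists_perp_of_oplus_eq (h : A.IsIndexedCover c M) {a b d : E} (ha : a ∈ M)
    (hb : b ∈ M) (hd : A.oplus b d = some a) :
    ∃ (T : Finset ι) (p q : E),
      ∑ i ∈ T, A.of (c i) = A.of p ∧ A.oplus q d = some p ∧ A.Perp q p := by
  classical
  obtain ⟨s, hs⟩ := h.exists_sum_univ
  obtain ⟨P, hP⟩ := h.exists_sum a ha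
  obtain ⟨Q, hQ⟩ := h.exists_sum b hb
  rw [← Finset.sum_inter_add_sum_sdiff P Q] at hP
  rw [← Finset.sum_inter_add_sum_sdiff Q P, Finset.inter_comm] at hQ
  obtain ⟨p, hp⟩ := exists_of_eq_right hP
  obtain ⟨q, hq⟩ := exists_of_eq_right hQ
  refine ⟨P \ Q, p, q, hp, ?_, perp_of_sum_eq_of_disjoint hs disjoint_sdiff_sdiff hq hp⟩
  rw [hp] at hP
  rw [hq] at hQ
  refine add_left_cancel_of_eq_of ?_ hP
  change _ + (A.of q + A.of d) = A.of a
  rw [← add_assoc, hQ, of_add_of_eq_of_iff.2 hd]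

theorem IsIndexedCover.exists_insert_of_oplus_eq (h : A.IsIndexedCover c M) (hH : A.Homogeneous)
    (hX : ∀ i, c i ∈ X) {a b d : E} (ha : a ∈ M) (hb : b ∈ M) (hd : A.oplus b d = some a) :
    ∃ c' : ι ⊕ ι → E, (∀ i, c' i ∈ A.closureStep X) ∧ A.IsIndexedCover c' (insert d M) := by
  obtain ⟨T, p, q, hp, hqd, hqp⟩ := h.exists_perp_of_oplus_eq ha hb hd
  obtain ⟨f, hf, hfq⟩ := hH.exists_sum_eq c T hp (le_left_of_oplus_eq hqd) hqp
  choose g hg using fun i => (hf i).1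
  have sum_g : ∑ i ∈ T, A.of (g i) = A.of d := by
    refine add_left_cancel_of_eq_of (x := A.of q) (e := p) ?_ hqd
    rw [← hfq, ← hp, ← Finset.sum_add_distrib]
    exact Finset.sum_congr rfl fun i _ => hg i
  refine ⟨Sum.elim f g, ?_, (h.sumElim hg).insert_of_sum_eq (S := T.map .inr) ?_⟩
  · rintro (i | i)
    · exact Or.inl ⟨c i, hX i, (hf i).1, (hf i).2.le_compl⟩
    · exact Or.inr ⟨c i, hX i, f i, (hf i).1, (hf i).2.le_compl, hg i⟩
  · simpa only [Finset.sum_map, Function.Embedding.inr_apply, Sum.elim_inr] using sum_g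

theorem CompatWithCoversIn.mono_right (h : A.CompatWithCoversIn M X) (hXY : X ⊆ Y) :
    A.CompatWithCoversIn M Y := fun F hF => by
  obtain ⟨C, hC, hCF⟩ := h F hF
  exact ⟨C, fun x hx => hXY (hC x hx), hCF⟩

theorem closureStep_subset_closure (M : Set E) : A.closureStep M ⊆ A.closure M :=
  Set.subset_iUnion (A.closureSeq M) 1

end Cover

end EffectAlgebra

theorem internally_compatible_union_ominus_general {E : Type*} {A : EffectAlgebra E}
    (hH : A.Homogeneous) {M X : Set E} (hM : A.CompatWithCoversIn M X) {a b : E} (ha : a ∈ M)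
    (hb : b ∈ M) (hba : A.le b a) :
    A.CompatWithCoversIn (M ∪ {A.ominus a b}) (A.closureStep X) := by
  classical
  intro F hF
  let G : Finset E := insert a (insert b (F.erase (A.ominus a b)))
  have hGM : (G : Set E) ⊆ M := by
    simp only [G, Finset.coe_insert, Finset.coe_erase, Set.insert_subset_iff,
      Set.sdiff_singleton_subset_iff]
    exact ⟨ha, hb, Set.union_singleton ▸ hF⟩
  have hFG : (F : Set E) ⊆ insert (A.ominus a b) ↑G := by
    intro x hx
    by_cases hxd : x = A.ominus a b <;> simp_all [G]
  obtain ⟨C, hCX, hC⟩ := hM G hGM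
  obtain ⟨c, hcX, hc⟩ :=
    (EffectAlgebra.isCoverOf_iff_isIndexedCover_get.1 hC).exists_insert_of_oplus_eq hH
      (fun i => hCX _ (C.get_mem i)) (Finset.mem_insert_self a _)
      (Finset.mem_insert_of_mem (Finset.mem_insert_self b _)) (EffectAlgebra.oplus_ominus hba)
  exact (hc.mono hFG).exists_isCoverOf hcX

/-- If `M` is internally compatible with `M = M̄`, `a, b ∈ M` and
`b ≤ a`, then `M ∪ {a ⊖ b}` is internally compatible. -/
theorem internally_compatible_union_ominus {E : Type*} (A : EffectAlgebra E)
    (hH : A.Homogeneous) (M : Set E) (hM : A.InternallyCompatible M)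
    (hcl : M = A.closure M) (a b : E) (ha : a ∈ M) (hb : b ∈ M)
    (hba : A.le b a) :
    A.InternallyCompatible (M ∪ {A.ominus a b}) :=
  (internally_compatible_union_ominus_general hH hM ha hb hba).mono_right <|
    ((EffectAlgebra.closureStep_subset_closure M).trans hcl.ge).trans Set.subset_union_left
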